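/- Let g ∈ X^(s) strictly for a positive integer s, with g(x) → +∞ as x → ∞. For 1 ≤ k ≤ n, define L_{n,k}(x) = B_{n,k}(g'(x), g''(x), …, g^{(n−k+1)}(x)), where B_{n,k} denotes the Bell polynomial. Then L_{n,k} either vanishes identically for all large x or belongs to A^(sk−n−ν) strictly for some nonnegative integer ν (i.e., L_{n,k} ∈ X^(sk−n), not necessarily strictly). Moreover, L_{k,k}(x) = (g'(x))^k is positive for all large x and belongs to A^(sk−k) strictly. -/

import Mathlib

open Filter Finset Real

noncomputable section

/-- `α` has the Poincaré-type asymptotic expansion `α(x) ~ Σ_{i≥0} c_i x^(γ-i)` as `x → ∞`,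
which may be differentiated term by term any number of times: `α` is infinitely
differentiable on some `(a, ∞)` with `a > 0`, and for all `j N : ℕ`,
`α^{(j)}(x) − Σ_{i<N} c_i (γ−i)(γ−i−1)⋯(γ−i−j+1) x^(γ−i−j) = O(x^(γ−N−j))` as `x → ∞`. -/
def HasExpA (γ : ℝ) (c : ℕ → ℝ) (α : ℝ → ℝ) : Prop :=
  (∃ a : ℝ, 0 < a ∧ ∀ x ∈ Set.Ioi a, ContDiffAt ℝ (⊤ : ℕ∞) α x) ∧
  ∀ j N : ℕ,
    (fun x : ℝ => iteratedDeriv j α x -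
        ∑ i ∈ Finset.range N,
          c i * (∏ l ∈ Finset.range j, (γ - (i : ℝ) - (l : ℝ))) * x ^ (γ - (i : ℝ) - (j : ℝ)))
      =O[atTop] fun x : ℝ => x ^ (γ - (N : ℝ) - (j : ℝ))

/-- `α` belongs to the class `A^(γ)`. -/
def MemA (γ : ℝ) (α : ℝ → ℝ) : Prop := ∃ c : ℕ → ℝ, HasExpA γ c α

/-- `α` belongs to the class `A^(γ)` strictly (`c 0 ≠ 0`). -/
def MemAS (γ : ℝ) (α : ℝ → ℝ) : Prop := ∃ c : ℕ → ℝ, c 0 ≠ 0 ∧ HasExpA γ c α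

/-- `α` belongs to `X^(γ)` strictly: `α ∈ A^(γ)` strictly and every derivative `α^{(j)}`,
`j ≥ 1`, either vanishes identically for all large `x` or belongs to `A^(γ−j−k)` strictly
for some nonnegative integer `k`. -/
def MemXS (γ : ℝ) (α : ℝ → ℝ) : Prop :=
  MemAS γ α ∧
  ∀ j : ℕ, 1 ≤ j →
    (∀ᶠ x in atTop, iteratedDeriv j α x = 0) ∨
    ∃ k : ℕ, MemAS (γ - (j : ℝ) - (k : ℝ)) (iteratedDeriv j α)

/-- `f`, infinitely differentiable for all large `x`, belongs to the class `B^(m)`: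
`f(x) = Σ_{k=1}^m p_k(x) f^{(k)}(x)` for all large `x`, where for `1 ≤ k ≤ m−1` each `p_k`
either has an empty expansion (all its derivatives are `O(x^{−μ})` for every `μ > 0`) or
belongs to `A^(i_k)` strictly with `i_k ≤ k` an integer, and `p_m ∈ A^(i_m)` strictly with
`i_m ≤ m` an integer. -/
def MemB (m : ℕ) (f : ℝ → ℝ) : Prop :=
  (∀ᶠ x in atTop, ContDiffAt ℝ (⊤ : ℕ∞) f x) ∧
  ∃ p : ℕ → ℝ → ℝ,
    (∀ᶠ x in atTop, f x = ∑ k ∈ Finset.Icc 1 m, p k x * iteratedDeriv k f x) ∧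
    (∀ k ∈ Finset.Icc 1 (m - 1),
      ((∀ᶠ x in atTop, ContDiffAt ℝ (⊤ : ℕ∞) (p k) x) ∧
        ∀ μ : ℝ, 0 < μ → ∀ j : ℕ,
          (iteratedDeriv j (p k)) =O[atTop] fun x : ℝ => x ^ (-μ)) ∨
      ∃ i : ℤ, i ≤ (k : ℤ) ∧ MemAS (i : ℝ) (p k)) ∧
    ∃ i : ℤ, i ≤ (m : ℤ) ∧ MemAS (i : ℝ) (p m)

/-- The Bell polynomial `B_{n,k}(y_1, …, y_{n−k+1})`. -/
def bellPoly (n k : ℕ) (y : ℕ → ℝ) : ℝ :=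
  ∑ j ∈ Finset.univ.filter
      (fun j : Fin (n - k + 1) → Fin (n + 1) =>
        (∑ i, (j i : ℕ)) = k ∧ (∑ i, (i.1 + 1) * (j i : ℕ)) = n),
    ((n.factorial : ℝ) / ∏ i, ((j i : ℕ).factorial : ℝ)) *
      ∏ i, (y (i.1 + 1) / ((i.1 + 1).factorial : ℝ)) ^ (j i : ℕ)

/-!
Formally, `g(x(1 + T)) - g(x) = Σ_{i≥1} (x^i g^{(i)}(x) / i!) T^i`, so `x^n L_{n,k}(x)` is `n!/k!`
times the coefficient of `T^n` in the `k`-th power of this increment. If `g(x) ~ Σ_l c_l x^(s-l)`,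
the increment expands as `x^s Φ` with `Φ = Σ_l c_l x^(-l) ((1 + T)^(s-l) - 1)`, a power series in
`T` and `1/x`.

For `n ≤ sk` the leading coefficient of `[T^n] Φ^k` is `c_0^k [T^n] ((1 + T)^s - 1)^k ≠ 0`. For
`n > sk` the terms of `Φ` with `l ≤ s` have degree at most `s` in `T`, so on their own they do not
reach `T^n`. If `M > s` is minimal with `c_M ≠ 0`, the coefficient of `x^(-M)` in `[T^n] Φ^k` is
`k c_0^(k-1) c_M [T^n] ((1 + T)^s - 1)^(k-1) ((1 + T)^(s-M) - 1)`; after dividing by `T^(k-1)` this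
is a nonnegative combination of coefficients of powers of `1 + T` that either have a fixed sign
(negative exponent) or vanish (small nonnegative exponent), hence it is nonzero. If there is no such
`M`, then `g^{(s+1)}` has the zero expansion, and `g ∈ X^(s)` forces it to vanish for large `x`.
-/

open scoped ContDiff PowerSeries Nat

section Preliminaries

theorem eventually_atTop_eventually_nhds {α : Type*} [LinearOrder α] [TopologicalSpace α]
    [ClosedIicTopology α] [Nonempty α] [NoMaxOrder α] {p : α → Prop} (h : ∀ᶠ x in atTop, p x) :
    ∀ᶠ x in atTop, ∀ᶠ y in nhds x, p y := by
  obtain ⟨a, ha⟩ := eventually_atTop.1 h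
  filter_upwards [eventually_gt_atTop a] with x hx
  filter_upwards [Ioi_mem_nhds hx] with y hy using ha y (le_of_lt hy)

theorem iteratedDeriv_iteratedDeriv {𝕜 F : Type*} [NontriviallyNormedField 𝕜]
    [NormedAddCommGroup F] [NormedSpace 𝕜 F] (i j : ℕ) (f : 𝕜 → F) :
    iteratedDeriv i (iteratedDeriv j f) = iteratedDeriv (i + j) f := by
  simp only [iteratedDeriv_eq_iterate, Function.iterate_add_apply]

theorem contDiffAt_iteratedDeriv_infty {𝕜 F : Type*} [NontriviallyNormedField 𝕜]
    [NormedAddCommGroup F] [NormedSpace 𝕜 F] {f : 𝕜 → F} {x : 𝕜} (h : ContDiffAt 𝕜 ∞ f x)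
    (j : ℕ) : ContDiffAt 𝕜 ∞ (iteratedDeriv j f) x := by
  induction j with
  | zero => simpa only [iteratedDeriv_zero] using h
  | succ j ih =>
    rw [iteratedDeriv_succ]
    exact ih.derivWithin (by norm_cast)

theorem prod_range_sub_eq_factorial_mul_choose (r : ℝ) (j : ℕ) :
    ∏ l ∈ range j, (r - l) = j ! * Ring.choose r j := by
  rw [← nsmul_eq_mul, ← Ring.descPochhammer_eq_factorial_smul_choose,
    ← descPochhammer_eval_eq_prod_range, ← descPochhammer_map (Int.castRingHom ℝ),
    Polynomial.eval_map, ← Polynomial.eval₂_smulOneHom_eq_smeval]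
  congr 1
  exact RingHom.ext_int _ _

theorem choose_natCast_sub_natCast_eq_zero {s l j : ℕ} (hl : l ≤ s) (hj : s - l < j) :
    Ring.choose (s - l : ℝ) j = 0 := by
  rw [← Nat.cast_sub hl, Ring.choose_natCast, Nat.choose_eq_zero_of_lt hj, Nat.cast_zero]

theorem iteratedDeriv_rpow_const (γ : ℝ) (j : ℕ) (x : ℝ) :
    iteratedDeriv j (fun x : ℝ => x ^ γ) x = j ! * Ring.choose γ j * x ^ (γ - j) := by
  rw [iteratedDeriv_eq_iterate, Real.iter_deriv_rpow_const, descPochhammer_eval_eq_prod_range,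
    prod_range_sub_eq_factorial_mul_choose]

theorem exists_eq_X_pow_mul {R : Type*} [Semiring R] {C : R⟦X⟧} (hC : C ≠ 0) :
    ∃ (ν : ℕ) (D : R⟦X⟧), D.coeff 0 ≠ 0 ∧ C = PowerSeries.X ^ ν * D := by
  obtain ⟨D, hD⟩ : PowerSeries.X ^ C.order.toNat ∣ C := PowerSeries.X_pow_order_dvd
  have hcoeff := congrArg (PowerSeries.coeff C.order.toNat) hD
  rw [PowerSeries.coeff_X_pow_mul', if_pos le_rfl, Nat.sub_self] at hcoeff
  exact ⟨C.order.toNat, D, hcoeff ▸ PowerSeries.coeff_order hC, hD⟩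

end Preliminaries

section Symbol

/-- The symbol class of order `γ` at `+∞`: functions that are smooth for large `x` and whose
`j`-th derivative is `O(x^(γ-j))` for every `j`. -/
def IsSymbol (γ : ℝ) (f : ℝ → ℝ) : Prop :=
  (∀ᶠ x in atTop, ContDiffAt ℝ ∞ f x) ∧
  ∀ j : ℕ, iteratedDeriv j f =O[atTop] fun x : ℝ => x ^ (γ - j)

namespace IsSymbol

variable {γ δ : ℝ} {f g : ℝ → ℝ}

theorem congr (hf : IsSymbol γ f) (h : f =ᶠ[atTop] g) : IsSymbol γ g := by
  have hnhds := eventually_atTop_eventually_nhds h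
  refine ⟨?_, fun j => (hf.2 j).congr' ?_ EventuallyEq.rfl⟩
  · filter_upwards [hf.1, hnhds] with x hx hfg using
      hx.congr_of_eventuallyEq (EventuallyEq.symm hfg)
  · filter_upwards [hnhds] with x hfg using EventuallyEq.iteratedDeriv_eq j hfg

theorem mono (hf : IsSymbol γ f) (h : γ ≤ δ) : IsSymbol δ f := by
  refine ⟨hf.1, fun j => (hf.2 j).trans (.of_bound 1 ?_)⟩
  filter_upwards [eventually_ge_atTop 1] with x hx
  rw [one_mul, norm_of_nonneg (by positivity), norm_of_nonneg (by positivity)]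
  gcongr

theorem add (hf : IsSymbol γ f) (hg : IsSymbol γ g) : IsSymbol γ fun x => f x + g x := by
  refine ⟨?_, fun j => ((hf.2 j).add (hg.2 j)).congr' ?_ EventuallyEq.rfl⟩
  · filter_upwards [hf.1, hg.1] with x hfx hgx using hfx.add hgx
  · filter_upwards [hf.1, hg.1] with x hfx hgx
    exact (iteratedDeriv_fun_add (hfx.of_le (mod_cast le_top)) (hgx.of_le (mod_cast le_top))).symm

theorem const_mul (c : ℝ) (hf : IsSymbol γ f) : IsSymbol γ fun x => c * f x := by
  refine ⟨?_, fun j => ((hf.2 j).const_mul_left c).congr_left fun x => ?_⟩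
  · filter_upwards [hf.1] with x hfx using contDiffAt_const.mul hfx
  · exact (iteratedDeriv_const_mul_field c f).symm

theorem mul (hf : IsSymbol γ f) (hg : IsSymbol δ g) : IsSymbol (γ + δ) fun x => f x * g x := by
  refine ⟨?_, fun j => ?_⟩
  · filter_upwards [hf.1, hg.1] with x hfx hgx using hfx.mul hgx
  have leibniz_terms : (fun x => ∑ i ∈ range (j + 1),
      (j.choose i : ℝ) * iteratedDeriv i f x * iteratedDeriv (j - i) g x) =O[atTop]
      fun x : ℝ => x ^ (γ + δ - j) := by
    refine .fun_sum fun i hi => ?_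
    refine (((hf.2 i).const_mul_left (j.choose i : ℝ)).mul (hg.2 (j - i))).congr'
      EventuallyEq.rfl ?_
    filter_upwards [eventually_gt_atTop 0] with x hx
    rw [← rpow_add hx, Nat.cast_sub (mem_range_succ_iff.1 hi)]
    congr 1
    ring
  refine leibniz_terms.congr' ?_ EventuallyEq.rfl
  filter_upwards [hf.1, hg.1] with x hfx hgx
  exact (iteratedDeriv_fun_mul (hfx.of_le (mod_cast le_top)) (hgx.of_le (mod_cast le_top))).symm

theorem rpow (γ : ℝ) : IsSymbol γ fun x => x ^ γ := by
  refine ⟨?_, fun j => ?_⟩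
  · filter_upwards [eventually_gt_atTop 0] with x hx using contDiffAt_rpow_const_of_ne hx.ne'
  · simp only [funext (iteratedDeriv_rpow_const γ j)]
    exact (Asymptotics.isBigO_refl _ _).const_mul_left _

theorem zero (γ : ℝ) : IsSymbol γ fun _ => 0 := by
  simpa only [zero_mul] using (rpow γ).const_mul 0

theorem sum {ι : Type*} {f : ι → ℝ → ℝ} (s : Finset ι) (h : ∀ i ∈ s, IsSymbol γ (f i)) :
    IsSymbol γ fun x => ∑ i ∈ s, f i x := by
  classical
  induction s using Finset.induction_on with
  | empty => simpa only [sum_empty] using zero γ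
  | insert a s ha ih =>
    simp only [sum_insert ha]
    exact (h a (mem_insert_self a s)).add (ih fun i hi => h i (mem_insert_of_mem hi))

theorem rpow_mul_eval_inv (γ : ℝ) (P : Polynomial ℝ) :
    IsSymbol γ fun x => x ^ γ * P.eval x⁻¹ := by
  have hterms : IsSymbol γ fun x : ℝ => ∑ i ∈ range (P.natDegree + 1),
      P.coeff i * x ^ (γ - i) :=
    .sum _ fun i _ => ((rpow (γ - i)).mono (by simp)).const_mul _
  refine hterms.congr ?_
  filter_upwards [eventually_gt_atTop 0] with x hx
  rw [Polynomial.eval_eq_sum_range, mul_sum]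
  refine sum_congr rfl fun i _ => ?_
  rw [rpow_sub hx, rpow_natCast, inv_pow]
  ring

protected theorem iteratedDeriv (hf : IsSymbol γ f) (j : ℕ) :
    IsSymbol (γ - j) (iteratedDeriv j f) := by
  refine ⟨?_, fun i => ?_⟩
  · filter_upwards [hf.1] with x hfx using contDiffAt_iteratedDeriv_infty hfx j
  · rw [iteratedDeriv_iteratedDeriv]
    refine (hf.2 (i + j)).congr_right fun x => ?_
    congr 1
    push_cast
    ring

end IsSymbol

end Symbol

section Expansion

/-- The partial sum `Σ_{i<N} C_i x^(γ-i)` of a formal expansion, whose coefficient sequence is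
encoded as a power series in `1/x`. -/
def expansionSum (γ : ℝ) (C : ℝ⟦X⟧) (N : ℕ) (x : ℝ) : ℝ :=
  ∑ i ∈ range N, C.coeff i * x ^ (γ - i)

/-- `f(x) ~ Σ_i C_i x^(γ-i)` with remainders in the symbol classes. This is `HasExpA`, rephrased
so that products of functions correspond to products of power series. -/
def HasExpansion (γ : ℝ) (C : ℝ⟦X⟧) (f : ℝ → ℝ) : Prop :=
  ∀ N : ℕ, IsSymbol (γ - N) fun x => f x - expansionSum γ C N x

/-- The coefficients of the termwise `j`-th derivative of `Σ_i C_i x^(γ-i)`, as an expansion with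
leading exponent `γ - j`. -/
def derivCoeffs (γ : ℝ) (j : ℕ) (C : ℝ⟦X⟧) : ℝ⟦X⟧ :=
  .mk fun i => C.coeff i * (j ! * Ring.choose (γ - i) j)

theorem derivCoeffs_natCast_eq_zero {s : ℕ} {c : ℝ⟦X⟧} (hc : ∀ l, s < l → c.coeff l = 0) {j : ℕ}
    (hj : s < j) : derivCoeffs s j c = 0 := by
  ext l
  rw [derivCoeffs, PowerSeries.coeff_mk, map_zero]
  rcases lt_or_ge s l with hl | hl
  · rw [hc l hl, zero_mul]
  · rw [choose_natCast_sub_natCast_eq_zero hl (by omega), mul_zero, mul_zero]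

variable {γ δ : ℝ} {C D : ℝ⟦X⟧} {f g : ℝ → ℝ}

theorem contDiffAt_expansionSum (γ : ℝ) (C : ℝ⟦X⟧) (N : ℕ) {x : ℝ} (hx : 0 < x) :
    ContDiffAt ℝ ∞ (expansionSum γ C N) x :=
  ContDiffAt.sum fun _ _ => contDiffAt_const.mul (contDiffAt_rpow_const_of_ne hx.ne')

theorem iteratedDeriv_expansionSum (γ : ℝ) (C : ℝ⟦X⟧) (N j : ℕ) {x : ℝ} (hx : 0 < x) :
    iteratedDeriv j (expansionSum γ C N) x = expansionSum (γ - j) (derivCoeffs γ j C) N x := by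
  unfold expansionSum
  rw [iteratedDeriv_fun_sum fun i _ =>
    contDiffAt_const.mul (contDiffAt_rpow_const_of_ne hx.ne')]
  refine sum_congr rfl fun i _ => ?_
  rw [iteratedDeriv_const_mul_field, iteratedDeriv_rpow_const, derivCoeffs,
    PowerSeries.coeff_mk, sub_right_comm]
  ring

theorem iteratedDeriv_sub_expansionSum (hf : ∀ᶠ x in atTop, ContDiffAt ℝ ∞ f x)
    (γ : ℝ) (C : ℝ⟦X⟧) (N j : ℕ) :
    (iteratedDeriv j fun x => f x - expansionSum γ C N x) =ᶠ[atTop]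
      fun x => iteratedDeriv j f x - expansionSum (γ - j) (derivCoeffs γ j C) N x := by
  filter_upwards [hf, eventually_gt_atTop 0] with x hfx hx
  rw [← iteratedDeriv_expansionSum γ C N j hx]
  exact iteratedDeriv_fun_sub (hfx.of_le (mod_cast le_top))
    ((contDiffAt_expansionSum γ C N hx).of_le (mod_cast le_top))

theorem expansionSum_eq_rpow_mul_eval_trunc (γ : ℝ) (C : ℝ⟦X⟧) (N : ℕ) {x : ℝ} (hx : 0 < x) :
    expansionSum γ C N x = x ^ γ * (C.trunc N).eval x⁻¹ := by
  have htrunc : C.trunc N = ∑ i ∈ range N, Polynomial.monomial i (C.coeff i) := by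
    rw [range_eq_Ico]
    rfl
  rw [expansionSum, htrunc, Polynomial.eval_finsetSum, mul_sum]
  refine sum_congr rfl fun i _ => ?_
  rw [Polynomial.eval_monomial]
  rw [rpow_sub hx, rpow_natCast, inv_pow]
  ring

theorem expansionSum_X_pow_mul (γ : ℝ) (C : ℝ⟦X⟧) (ν N : ℕ) :
    expansionSum γ (PowerSeries.X ^ ν * C) (ν + N) = expansionSum (γ - ν) C N := by
  funext x
  simp only [expansionSum, sum_range_add]
  rw [sum_eq_zero fun i hi => ?_, zero_add]
  · refine sum_congr rfl fun i _ => ?_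
    rw [add_comm ν i, PowerSeries.coeff_X_pow_mul, Nat.cast_add, sub_sub, add_comm (i : ℝ)]
  · rw [PowerSeries.coeff_X_pow_mul', if_neg (by simpa using hi), zero_mul]

namespace HasExpansion

theorem isSymbol (h : HasExpansion γ C f) : IsSymbol γ f := by
  simpa [expansionSum] using h 0

theorem zero (γ : ℝ) : HasExpansion γ 0 fun _ => 0 := fun N => by
  simpa [expansionSum] using IsSymbol.zero (γ - N)

theorem one : HasExpansion 0 1 fun _ => 1 := fun N => by
  cases N with
  | zero => simpa [expansionSum] using IsSymbol.rpow 0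
  | succ N =>
    simpa [expansionSum, PowerSeries.coeff_one, sum_range_succ'] using
      IsSymbol.zero (0 - (N + 1 : ℕ))

theorem add (hf : HasExpansion γ C f) (hg : HasExpansion γ D g) :
    HasExpansion γ (C + D) fun x => f x + g x := fun N => by
  refine ((hf N).add (hg N)).congr (.of_forall fun x => ?_)
  simp only [expansionSum, map_add, add_mul, sum_add_distrib]
  ring

theorem const_mul (c : ℝ) (hf : HasExpansion γ C f) :
    HasExpansion γ (c • C) fun x => c * f x := fun N => by
  refine ((hf N).const_mul c).congr (.of_forall fun x => ?_)
  simp only [expansionSum, PowerSeries.coeff_smul, smul_eq_mul, mul_sub, mul_sum,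
    mul_assoc]

theorem sum {ι : Type*} {C : ι → ℝ⟦X⟧} {f : ι → ℝ → ℝ} (s : Finset ι)
    (h : ∀ i ∈ s, HasExpansion γ (C i) (f i)) :
    HasExpansion γ (∑ i ∈ s, C i) fun x => ∑ i ∈ s, f i x := by
  classical
  induction s using Finset.induction_on with
  | empty => simpa only [sum_empty] using zero γ
  | insert a s ha ih =>
    simp only [sum_insert ha]
    exact (h a (mem_insert_self a s)).add (ih fun i hi => h i (mem_insert_of_mem hi))

theorem mul (hf : HasExpansion γ C f) (hg : HasExpansion δ D g) :
    HasExpansion (γ + δ) (C * D) fun x => f x * g x := fun N => by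
  obtain ⟨Q, hQ⟩ : Polynomial.X ^ N ∣ C.trunc N * D.trunc N - (C * D).trunc N := by
    rw [Polynomial.X_pow_dvd_iff]
    intro d hd
    rw [Polynomial.coeff_sub, PowerSeries.coeff_trunc, if_pos hd,
      PowerSeries.coeff_mul_eq_coeff_trunc_mul_trunc _ _ hd, ← Polynomial.coe_mul,
      Polynomial.coeff_coe, sub_self]
  have h_left := (IsSymbol.rpow_mul_eval_inv γ (C.trunc N)).mul (hg N)
  have h_right := (hf N).mul hg.isSymbol
  have h_overlap := IsSymbol.rpow_mul_eval_inv (γ + δ - N) Q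
  rw [← add_sub_assoc] at h_left
  rw [sub_add_eq_add_sub] at h_right
  refine ((h_left.add h_right).add h_overlap).congr ?_
  filter_upwards [eventually_gt_atTop 0] with x hx
  have hQx := congrArg (Polynomial.eval x⁻¹) hQ
  simp only [Polynomial.eval_sub, Polynomial.eval_mul, Polynomial.eval_pow, Polynomial.eval_X,
    inv_pow] at hQx
  simp only [expansionSum_eq_rpow_mul_eval_trunc _ _ _ hx]
  rw [rpow_sub hx, rpow_natCast, rpow_add hx]
  linear_combination (-(x ^ γ * x ^ δ)) * hQx

protected theorem iteratedDeriv (hf : HasExpansion γ C f) (j : ℕ) :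
    HasExpansion (γ - j) (derivCoeffs γ j C) (iteratedDeriv j f) := fun N => by
  rw [sub_right_comm]
  exact ((hf N).iteratedDeriv j).congr (iteratedDeriv_sub_expansionSum hf.isSymbol.1 γ C N j)

theorem of_X_pow_mul {ν : ℕ} (hf : HasExpansion γ (PowerSeries.X ^ ν * C) f) :
    HasExpansion (γ - ν) C f := fun N => by
  simpa only [expansionSum_X_pow_mul, Nat.cast_add, sub_sub] using hf (ν + N)

theorem zero_of_zero (hf : HasExpansion γ 0 f) (δ : ℝ) : HasExpansion δ 0 f := fun N => by
  obtain ⟨M, hM⟩ := exists_nat_gt (γ - (δ - N))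
  simpa [expansionSum] using (hf M).mono (by linarith : γ - M ≤ δ - N)

theorem tendsto_div_rpow (hf : HasExpansion γ C f) :
    Tendsto (fun x => f x / x ^ γ) atTop (nhds (C.coeff 0)) := by
  have hremainder : Tendsto (fun x => (f x - C.coeff 0 * x ^ γ) / x ^ γ) atTop (nhds 0) := by
    have hbound : (fun x => f x - C.coeff 0 * x ^ γ) =O[atTop] fun x => x ^ (γ - 1) := by
      simpa [expansionSum] using (hf 1).2 0
    refine (hbound.mul (Asymptotics.isBigO_refl (fun x : ℝ => (x ^ γ)⁻¹) atTop)).trans_tendsto ?_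
    refine (tendsto_rpow_neg_atTop one_pos).congr' ?_
    filter_upwards [eventually_gt_atTop 0] with x hx
    rw [← rpow_neg hx.le, ← rpow_add hx]
    congr 1
    ring
  refine (zero_add (C.coeff 0) ▸ hremainder.add_const (C.coeff 0)).congr' ?_
  filter_upwards [eventually_gt_atTop 0] with x hx
  have : x ^ γ ≠ 0 := by positivity
  field_simp
  ring

theorem coeff_zero_eq_zero (hf : HasExpansion γ 0 f) (hf' : HasExpansion δ C f) :
    C.coeff 0 = 0 :=
  tendsto_nhds_unique hf'.tendsto_div_rpow (by simpa using (hf.zero_of_zero δ).tendsto_div_rpow)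

theorem eventually_pos (hf : HasExpansion γ C f) (hC : 0 < C.coeff 0) :
    ∀ᶠ x in atTop, 0 < f x := by
  filter_upwards [hf.tendsto_div_rpow.eventually_const_lt hC, eventually_gt_atTop 0] with x hfx hx
  exact (div_pos_iff_of_pos_right (by positivity)).1 hfx

theorem coeff_zero_nonneg (hf : HasExpansion γ C f) (hpos : ∀ᶠ x in atTop, 0 ≤ f x) :
    0 ≤ C.coeff 0 := by
  refine ge_of_tendsto hf.tendsto_div_rpow ?_
  filter_upwards [hpos, eventually_gt_atTop 0] with x hfx hx
  positivity

end HasExpansion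

theorem hasExpA_iff_hasExpansion {c : ℕ → ℝ} :
    HasExpA γ c f ↔ HasExpansion γ (.mk c) f := by
  have hsum (j N : ℕ) (x : ℝ) :
      ∑ i ∈ range N, c i * (∏ l ∈ range j, (γ - i - l)) * x ^ (γ - i - j) =
        expansionSum (γ - j) (derivCoeffs γ j (.mk c)) N x := by
    refine sum_congr rfl fun i _ => ?_
    rw [derivCoeffs, PowerSeries.coeff_mk, PowerSeries.coeff_mk,
      prod_range_sub_eq_factorial_mul_choose, sub_right_comm]
  simp only [HasExpA, hsum]
  rw [← (atTop_basis_Ioi' (0 : ℝ)).eventually_iff]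
  constructor
  · rintro ⟨hsmooth, hbound⟩ N
    refine ⟨?_, fun j => (hbound j N).congr'
      (iteratedDeriv_sub_expansionSum hsmooth γ _ N j).symm EventuallyEq.rfl⟩
    filter_upwards [hsmooth, eventually_gt_atTop 0] with x hfx hx
    exact hfx.sub (contDiffAt_expansionSum γ _ N hx)
  · intro h
    exact ⟨h.isSymbol.1, fun j N => ((h N).2 j).congr'
      (iteratedDeriv_sub_expansionSum h.isSymbol.1 γ _ N j) EventuallyEq.rfl⟩

theorem MemAS.exists_hasExpansion (hf : MemAS γ f) :
    ∃ C : ℝ⟦X⟧, C.coeff 0 ≠ 0 ∧ HasExpansion γ C f := by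
  obtain ⟨c, hc0, hc⟩ := hf
  exact ⟨.mk c, by rwa [PowerSeries.coeff_mk], hasExpA_iff_hasExpansion.1 hc⟩

theorem HasExpansion.memAS (hf : HasExpansion γ C f) (hC : C.coeff 0 ≠ 0) : MemAS γ f :=
  ⟨fun i => C.coeff i, hC, hasExpA_iff_hasExpansion.2 <| by
    rwa [show PowerSeries.mk (fun i => C.coeff i) = C by ext; simp]⟩

theorem HasExpansion.exists_memAS (hf : HasExpansion γ C f) (hC : C ≠ 0) :
    ∃ ν : ℕ, MemAS (γ - ν) f := by
  obtain ⟨ν, D, hD0, rfl⟩ := exists_eq_X_pow_mul hC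
  exact ⟨ν, hf.of_X_pow_mul.memAS hD0⟩

end Expansion

section CoeffPow

variable {R : Type*}

theorem coeff_pow_eq_zero [CommSemiring R] {f : R⟦X⟧} {d : ℕ}
    (hf : ∀ i, d < i → f.coeff i = 0) {k n : ℕ} (hn : d * k < n) : (f ^ k).coeff n = 0 := by
  rw [PowerSeries.coeff_pow]
  refine sum_eq_zero fun l hl => ?_
  obtain ⟨i, hi, hdi⟩ : ∃ i ∈ range k, d < l i := by
    refine exists_lt_of_sum_lt ?_
    rwa [(mem_finsuppAntidiag.1 hl).1, sum_const, card_range, smul_eq_mul, mul_comm]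
  exact prod_eq_zero hi (hf _ hdi)

theorem coeff_pow_nonneg [CommSemiring R] [PartialOrder R] [IsOrderedRing R] {f : R⟦X⟧}
    (hf : ∀ i, 0 ≤ f.coeff i) (k n : ℕ) : 0 ≤ (f ^ k).coeff n := by
  rw [PowerSeries.coeff_pow]
  exact sum_nonneg fun l _ => prod_nonneg fun i _ => hf (l i)

theorem coeff_pow_pos [CommSemiring R] [PartialOrder R] [IsStrictOrderedRing R] {f : R⟦X⟧}
    (hf : ∀ i, 0 ≤ f.coeff i) {a b : ℕ} (hpos : ∀ i, a ≤ i → i ≤ b → 0 < f.coeff i)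
    {k n : ℕ} (hak : a * k ≤ n) (hbk : n ≤ b * k) : 0 < (f ^ k).coeff n := by
  induction k generalizing n with
  | zero =>
    obtain rfl : n = 0 := by simpa using hbk
    simp
  | succ k ih =>
    have hab : a ≤ b := Nat.le_of_mul_le_mul_right (hak.trans hbk) k.succ_pos
    have habk : a * k ≤ b * k := Nat.mul_le_mul_right k hab
    rw [Nat.mul_succ] at hak hbk
    rw [pow_succ, PowerSeries.coeff_mul]
    refine sum_pos' (fun p _ => mul_nonneg (coeff_pow_nonneg hf k p.1) (hf p.2))
      ⟨(n - max a (n - b * k), max a (n - b * k)), ?_, mul_pos (ih ?_ ?_) (hpos _ ?_ ?_)⟩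
    · rw [HasAntidiagonal.mem_antidiagonal]
      omega
    all_goals dsimp only; omega

theorem coeff_sum_C_mul_X_pow_pow [CommSemiring R] {ι : Type*} [Fintype ι] [DecidableEq ι]
    (a : ι → R) (w : ι → ℕ) (k n : ℕ) :
    ((∑ i, PowerSeries.C (a i) * PowerSeries.X ^ w i) ^ k).coeff n =
      ∑ j ∈ (piAntidiag univ k).filter fun j : ι → ℕ => ∑ i, w i * j i = n,
        Nat.multinomial univ j * ∏ i, a i ^ j i := by
  rw [sum_pow_eq_sum_piAntidiag, map_sum, sum_filter]
  refine sum_congr rfl fun j _ => ?_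
  have hmonomial : (Nat.multinomial univ j : R⟦X⟧) *
      ∏ i, (PowerSeries.C (a i) * PowerSeries.X ^ w i) ^ j i =
      PowerSeries.C (Nat.multinomial univ j * ∏ i, a i ^ j i) *
        PowerSeries.X ^ ∑ i, w i * j i := by
    simp only [mul_pow, prod_mul_distrib, map_mul, map_natCast, map_prod, map_pow, ← pow_mul,
      prod_pow_eq_pow_sum, mul_assoc]
  rw [hmonomial, PowerSeries.coeff_C_mul, PowerSeries.coeff_X_pow, mul_ite, mul_one, mul_zero]
  simp only [eq_comm]

theorem coeff_coeff_add_C_X_pow_mul_pow [CommRing R] (A B : R⟦X⟧⟦X⟧) {M : ℕ} (hM : 0 < M)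
    (k n : ℕ) :
    (((A + PowerSeries.C (PowerSeries.X ^ M) * B) ^ k).coeff n).coeff M =
      ((A ^ k).coeff n).coeff M +
        k * (A.map PowerSeries.constantCoeff ^ (k - 1) *
          B.map PowerSeries.constantCoeff).coeff n := by
  obtain ⟨w, hw⟩ := Polynomial.powAddExpansion A (PowerSeries.C (PowerSeries.X ^ M) * B) k
  have hexpand : (A + PowerSeries.C (PowerSeries.X ^ M) * B) ^ k =
      A ^ k + PowerSeries.C (PowerSeries.X ^ M) *
        ((k : R⟦X⟧⟦X⟧) * (A ^ (k - 1) * B) + PowerSeries.C (PowerSeries.X ^ M) * (w * B ^ 2)) := by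
    rw [hw]
    ring
  have hconst (P : R⟦X⟧⟦X⟧) :
      (P.coeff n).coeff 0 = (P.map PowerSeries.constantCoeff).coeff n := by
    rw [PowerSeries.coeff_map, PowerSeries.coeff_zero_eq_constantCoeff_apply]
  rw [hexpand, map_add, map_add, PowerSeries.coeff_C_mul, PowerSeries.coeff_X_pow_mul',
    if_pos le_rfl, Nat.sub_self, hconst]
  simp only [map_add, map_mul, map_pow, map_natCast, PowerSeries.map_C,
    PowerSeries.constantCoeff_X, zero_pow hM.ne', map_zero, zero_mul, add_zero]
  rw [← map_natCast (PowerSeries.C (R := R)), PowerSeries.coeff_C_mul]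

end CoeffPow

section BellSeries

/-- The exponential generating function `Σ_{i≥1} y_i T^i / i!`, whose powers generate the Bell
polynomials. -/
def bellSeries (y : ℕ → ℝ) : ℝ⟦X⟧ :=
  PowerSeries.X * .mk fun i => y (i + 1) / (i + 1)!

theorem coeff_succ_bellSeries (y : ℕ → ℝ) (i : ℕ) :
    (bellSeries y).coeff (i + 1) = y (i + 1) / (i + 1)! := by
  rw [bellSeries, PowerSeries.coeff_succ_X_mul, PowerSeries.coeff_mk]

theorem coeff_zero_bellSeries (y : ℕ → ℝ) : (bellSeries y).coeff 0 = 0 :=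
  PowerSeries.coeff_zero_X_mul _

theorem coeff_bellSeries_pow (y : ℕ → ℝ) {n k : ℕ} (hkn : k ≤ n) :
    (bellSeries y ^ k).coeff n =
      ((∑ i : Fin (n - k + 1), PowerSeries.C (y (i + 1) / (i + 1)!) *
        PowerSeries.X ^ (i + 1 : ℕ)) ^ k).coeff n := by
  set Ψ : ℝ⟦X⟧ := .mk fun i => y (i + 1) / (i + 1)! with hΨ
  have htrunc : ∑ i : Fin (n - k + 1), PowerSeries.C (y (i + 1) / (i + 1)!) *
      PowerSeries.X ^ (i + 1 : ℕ) = PowerSeries.X * (Ψ.trunc (n - k + 1) : ℝ⟦X⟧) := by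
    rw [Fin.sum_univ_eq_sum_range fun i =>
      PowerSeries.C (y (i + 1) / (i + 1)!) * PowerSeries.X ^ (i + 1)]
    ext (_ | i)
    · simp
    · simp [PowerSeries.coeff_succ_X_mul, PowerSeries.coeff_X_pow, PowerSeries.coeff_trunc, hΨ]
  rw [htrunc, bellSeries, mul_pow, mul_pow, PowerSeries.coeff_X_pow_mul', if_pos hkn,
    PowerSeries.coeff_X_pow_mul', if_pos hkn]
  have hpow := congrArg (Polynomial.coeff · (n - k))
    (PowerSeries.trunc_trunc_pow Ψ (n - k + 1) k)
  simpa only [PowerSeries.coeff_trunc, if_pos (Nat.lt_succ_self _)] using hpow.symm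

theorem factorial_div_prod_factorial_eq_mul_multinomial {ι : Type*} [Fintype ι] (n : ℕ)
    (j : ι → ℕ) :
    (n ! : ℝ) / ∏ i, ((j i)! : ℝ) = n ! / (∑ i, j i)! * Nat.multinomial univ j := by
  have hspec : (∏ i, ((j i)! : ℝ)) * Nat.multinomial univ j = (∑ i, j i)! :=
    mod_cast Nat.multinomial_spec univ j
  have : (∏ i, ((j i)! : ℝ)) ≠ 0 := prod_ne_zero_iff.2 fun i _ => by positivity
  have : ((∑ i, j i)! : ℝ) ≠ 0 := by positivity
  rw [div_mul_eq_mul_div, div_eq_div_iff ‹_› ‹_›, ← hspec]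
  ring

theorem bellPoly_eq_coeff_bellSeries_pow (y : ℕ → ℝ) {n k : ℕ} (hkn : k ≤ n) :
    bellPoly n k y = n ! / k ! * (bellSeries y ^ k).coeff n := by
  rw [coeff_bellSeries_pow y hkn, coeff_sum_C_mul_X_pow_pow, mul_sum, bellPoly]
  refine sum_bij (fun j _ i => (j i : ℕ)) ?_ ?_ ?_ ?_
  · intro j hj
    simpa using hj
  · exact fun a _ b _ hab => funext fun i => Fin.ext (congrFun hab i)
  · intro j hj
    simp only [mem_filter, mem_piAntidiag] at hj
    have hle (i : Fin (n - k + 1)) : j i < n + 1 := by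
      refine Nat.lt_succ_of_le (le_trans ?_ hkn)
      exact hj.1.1 ▸ single_le_sum (fun _ _ => Nat.zero_le _) (mem_univ i)
    exact ⟨fun i => ⟨j i, hle i⟩, by simp [hj.1.1, hj.2], rfl⟩
  · intro j hj
    rw [factorial_div_prod_factorial_eq_mul_multinomial, (mem_filter.1 hj).2.1, mul_assoc]

theorem bellPoly_self (k : ℕ) (y : ℕ → ℝ) : bellPoly k k y = y 1 ^ k := by
  rw [bellPoly_eq_coeff_bellSeries_pow y le_rfl, div_self (by positivity), one_mul, bellSeries,
    mul_pow, PowerSeries.coeff_X_pow_mul', if_pos le_rfl, Nat.sub_self,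
    PowerSeries.coeff_zero_eq_constantCoeff_apply, map_pow]
  simp [← PowerSeries.coeff_zero_eq_constantCoeff_apply]

theorem bellPoly_eq_zero {y : ℕ → ℝ} {d n k : ℕ} (hy : ∀ i, d < i → y i = 0) (hkn : k ≤ n)
    (hn : d * k < n) : bellPoly n k y = 0 := by
  rw [bellPoly_eq_coeff_bellSeries_pow y hkn, coeff_pow_eq_zero (d := d) _ hn, mul_zero]
  rintro (_ | i) hi
  · exact coeff_zero_bellSeries y
  · rw [coeff_succ_bellSeries, hy _ hi, zero_div]

end BellSeries

section TaylorIncrement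

/-- The formal double series `g(x(1 + T)) - g(x) = Σ_l c_l x^(γ-l) ((1 + T)^(γ-l) - 1)` attached to
`g(x) ~ Σ_l c_l x^(γ-l)`, with the factor `x^γ` omitted; the outer variable is `T`, the inner one
is `1/x`. -/
def taylorIncrement (γ : ℝ) (c : ℝ⟦X⟧) : ℝ⟦X⟧⟦X⟧ :=
  .mk fun i => .mk fun l => c.coeff l * (PowerSeries.binomialSeries ℝ (γ - l) - 1).coeff i

theorem coeff_coeff_taylorIncrement (γ : ℝ) (c : ℝ⟦X⟧) (i l : ℕ) :
    ((taylorIncrement γ c).coeff i).coeff l =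
      c.coeff l * (PowerSeries.binomialSeries ℝ (γ - l) - 1).coeff i := by
  rw [taylorIncrement, PowerSeries.coeff_mk, PowerSeries.coeff_mk]

theorem coeff_zero_binomialSeries_sub_one (r : ℝ) :
    (PowerSeries.binomialSeries ℝ r - 1).coeff 0 = 0 := by
  simp

theorem coeff_succ_binomialSeries_sub_one (r : ℝ) (i : ℕ) :
    (PowerSeries.binomialSeries ℝ r - 1).coeff (i + 1) = Ring.choose r (i + 1) := by
  simp [PowerSeries.coeff_one]

theorem coeff_zero_taylorIncrement (γ : ℝ) (c : ℝ⟦X⟧) : (taylorIncrement γ c).coeff 0 = 0 := by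
  ext l
  rw [coeff_coeff_taylorIncrement, coeff_zero_binomialSeries_sub_one, mul_zero, map_zero]

theorem coeff_succ_taylorIncrement (γ : ℝ) (c : ℝ⟦X⟧) (i : ℕ) :
    (taylorIncrement γ c).coeff (i + 1) = ((i + 1)! : ℝ)⁻¹ • derivCoeffs γ (i + 1) c := by
  ext l
  have : ((i + 1)! : ℝ) ≠ 0 := by positivity
  rw [coeff_coeff_taylorIncrement, coeff_succ_binomialSeries_sub_one, PowerSeries.coeff_smul,
    derivCoeffs, PowerSeries.coeff_mk, smul_eq_mul]
  field_simp

theorem coeff_taylorIncrement_natCast_eq_zero {s : ℕ} {c : ℝ⟦X⟧}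
    (hc : ∀ l, s < l → c.coeff l = 0) {i : ℕ} (hi : s < i) :
    (taylorIncrement s c).coeff i = 0 := by
  obtain ⟨i, rfl⟩ := Nat.exists_eq_succ_of_ne_zero (Nat.ne_zero_of_lt hi)
  rw [coeff_succ_taylorIncrement, derivCoeffs_natCast_eq_zero hc hi, smul_zero]

theorem taylorIncrement_add (γ : ℝ) (a b : ℝ⟦X⟧) :
    taylorIncrement γ (a + b) = taylorIncrement γ a + taylorIncrement γ b := by
  ext i l
  simp only [map_add, coeff_coeff_taylorIncrement, add_mul]

theorem taylorIncrement_X_pow_mul (γ : ℝ) (M : ℕ) (b : ℝ⟦X⟧) :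
    taylorIncrement γ (PowerSeries.X ^ M * b) =
      PowerSeries.C (PowerSeries.X ^ M) * taylorIncrement (γ - M) b := by
  ext i l
  rw [PowerSeries.coeff_C_mul, coeff_coeff_taylorIncrement, PowerSeries.coeff_X_pow_mul',
    PowerSeries.coeff_X_pow_mul']
  split_ifs with hl
  · rw [coeff_coeff_taylorIncrement, Nat.cast_sub hl, sub_sub, add_sub_cancel]
  · exact zero_mul _

theorem map_constantCoeff_taylorIncrement (γ : ℝ) (c : ℝ⟦X⟧) :
    (taylorIncrement γ c).map PowerSeries.constantCoeff =
      c.coeff 0 • (PowerSeries.binomialSeries ℝ γ - 1) := by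
  ext i
  rw [PowerSeries.coeff_map, ← PowerSeries.coeff_zero_eq_constantCoeff_apply,
    coeff_coeff_taylorIncrement, Nat.cast_zero, sub_zero, PowerSeries.coeff_smul, smul_eq_mul]

theorem hasExpansion_coeff_pow {γ : ℝ} {Φ : ℝ⟦X⟧⟦X⟧} {F : ℝ → ℝ⟦X⟧}
    (h : ∀ n : ℕ, HasExpansion (γ - n) (Φ.coeff n) fun x => (F x).coeff n) (k n : ℕ) :
    HasExpansion (γ * k - n) ((Φ ^ k).coeff n) fun x => (F x ^ k).coeff n := by
  induction k generalizing n with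
  | zero =>
    rcases eq_or_ne n 0 with rfl | hn
    · simpa using HasExpansion.one
    · simpa [PowerSeries.coeff_one, hn] using HasExpansion.zero (-n)
  | succ k ih =>
    simp only [pow_succ, PowerSeries.coeff_mul]
    refine .sum _ fun p hp => ?_
    have hexponent : γ * k - p.1 + (γ - p.2) = γ * (k + 1 : ℕ) - n := by
      rw [← HasAntidiagonal.mem_antidiagonal.1 hp]
      push_cast
      ring
    exact hexponent ▸ (ih p.1).mul (h p.2)

theorem hasExpansion_coeff_bellSeries {γ : ℝ} {c : ℝ⟦X⟧} {g : ℝ → ℝ} (hg : HasExpansion γ c g)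
    (i : ℕ) :
    HasExpansion (γ - i) ((taylorIncrement γ c).coeff i)
      fun x => (bellSeries fun j => iteratedDeriv j g x).coeff i := by
  cases i with
  | zero =>
    simpa only [coeff_zero_taylorIncrement, coeff_zero_bellSeries] using
      HasExpansion.zero (γ - (0 : ℕ))
  | succ i =>
    simpa only [coeff_succ_taylorIncrement, coeff_succ_bellSeries, div_eq_inv_mul] using
      (hg.iteratedDeriv (i + 1)).const_mul ((i + 1)! : ℝ)⁻¹

theorem hasExpansion_bellPoly {γ : ℝ} {c : ℝ⟦X⟧} {g : ℝ → ℝ} (hg : HasExpansion γ c g)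
    {n k : ℕ} (hkn : k ≤ n) :
    HasExpansion (γ * k - n) ((n ! / k ! : ℝ) • (taylorIncrement γ c ^ k).coeff n)
      fun x => bellPoly n k fun i => iteratedDeriv i g x := by
  simp only [bellPoly_eq_coeff_bellSeries_pow _ hkn]
  exact (hasExpansion_coeff_pow (hasExpansion_coeff_bellSeries hg) k n).const_mul _

end TaylorIncrement

section Nonvanishing

theorem coeff_binomialSeries_natCast_sub_one_pow_pos {s k n : ℕ} (hkn : k ≤ n)
    (hn : n ≤ s * k) :
    0 < ((PowerSeries.binomialSeries ℝ (s : ℝ) - 1) ^ k).coeff n := by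
  refine coeff_pow_pos (a := 1) (b := s) ?_ ?_ (by rwa [one_mul]) hn
  · rintro (_ | i)
    · exact (coeff_zero_binomialSeries_sub_one _).ge
    · rw [coeff_succ_binomialSeries_sub_one, Ring.choose_natCast]
      positivity
  · rintro (_ | i) h1 hi
    · omega
    · rw [coeff_succ_binomialSeries_sub_one, Ring.choose_natCast]
      exact mod_cast Nat.choose_pos hi

theorem neg_one_pow_mul_choose_pos {r : ℝ} (hr : r < 0) (N : ℕ) :
    0 < (-1) ^ N * Ring.choose r N := by
  have hprod : (N ! : ℝ) * ((-1) ^ N * Ring.choose r N) = ∏ l ∈ range N, (l - r) := by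
    rw [mul_left_comm, ← prod_range_sub_eq_factorial_mul_choose]
    simpa using (prod_neg (s := range N) fun l => r - l).symm
  refine pos_of_mul_pos_right (hprod ▸ prod_pos fun l _ => ?_) (Nat.cast_nonneg _)
  have : (0 : ℝ) ≤ l := l.cast_nonneg
  linarith

theorem neg_one_pow_mul_coeff_aeval_mul_binomialSeries_pos {P : Polynomial ℕ}
    (hP : P.coeff 0 ≠ 0) {m N : ℕ} (hm : 0 < m) (hN : P.natDegree < N) :
    0 < (-1) ^ N * (Polynomial.aeval (1 + PowerSeries.X : ℝ⟦X⟧) P *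
      PowerSeries.binomialSeries ℝ (-m : ℝ)).coeff N := by
  have hterm (a : ℕ) : ((P.coeff a : ℝ⟦X⟧) * (1 + PowerSeries.X) ^ a *
      PowerSeries.binomialSeries ℝ (-m : ℝ)).coeff N =
      P.coeff a * Ring.choose (a - m : ℝ) N := by
    rw [← PowerSeries.binomialSeries_nat (R := ℝ), mul_assoc, ← PowerSeries.binomialSeries_add,
      ← sub_eq_add_neg, ← map_natCast (PowerSeries.C (R := ℝ)), PowerSeries.coeff_C_mul,
      PowerSeries.binomialSeries_coeff, smul_eq_mul, mul_one]
  rw [Polynomial.aeval_def, Polynomial.eval₂_eq_sum_range, sum_mul, map_sum, mul_sum]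
  simp only [eq_natCast, hterm]
  refine sum_pos' (fun a ha => ?_) ⟨0, by simp, ?_⟩
  · rw [mul_left_comm]
    refine mul_nonneg (Nat.cast_nonneg _) ?_
    rcases lt_or_ge a m with ham | ham
    · exact (neg_one_pow_mul_choose_pos (sub_neg.2 (mod_cast ham)) N).le
    · have haN : a ≤ P.natDegree := mem_range_succ_iff.1 ha
      rw [choose_natCast_sub_natCast_eq_zero ham (by omega), mul_zero]
  · rw [mul_left_comm]
    exact mul_pos (by positivity) (neg_one_pow_mul_choose_pos (by simpa using hm) N)

theorem coeff_binomialSeries_sub_one_pow_mul_ne_zero {s K m n : ℕ} (hs : 0 < s) (hm : 0 < m)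
    (hn : s * K < n) :
    ((PowerSeries.binomialSeries ℝ (s : ℝ) - 1) ^ K *
      (PowerSeries.binomialSeries ℝ (-m : ℝ) - 1)).coeff n ≠ 0 := by
  set P : Polynomial ℕ := (∑ a ∈ range s, Polynomial.X ^ a) ^ K with hPdef
  have hP0 : P.coeff 0 ≠ 0 := by
    simp [hPdef, Polynomial.coeff_zero_eq_eval_zero, Polynomial.eval_finsetSum, zero_pow_eq, hs]
  have hdeg : P.natDegree ≤ K * (s - 1) := by
    refine Polynomial.natDegree_pow_le_of_le K (Polynomial.natDegree_sum_le_of_forall_le _ _ ?_)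
    intro a ha
    rw [Polynomial.natDegree_X_pow]
    exact Nat.le_sub_one_of_lt (mem_range.1 ha)
  have hdegK : P.natDegree + K ≤ s * K := by
    calc P.natDegree + K ≤ K * (s - 1) + K := by gcongr
      _ = s * K := by rw [← Nat.mul_succ, Nat.succ_eq_add_one, Nat.sub_add_cancel hs, mul_comm]
  have hfactor : (PowerSeries.binomialSeries ℝ (s : ℝ) - 1) ^ K =
      PowerSeries.X ^ K * Polynomial.aeval (1 + PowerSeries.X : ℝ⟦X⟧) P := by
    rw [PowerSeries.binomialSeries_nat, ← geom_sum_mul, mul_pow, mul_comm, hPdef]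
    simp
  have hvanish : ((PowerSeries.binomialSeries ℝ (s : ℝ) - 1) ^ K).coeff n = 0 := by
    refine coeff_pow_eq_zero (d := s) (fun i hi => ?_) hn
    obtain ⟨i, rfl⟩ := Nat.exists_eq_succ_of_ne_zero (Nat.ne_zero_of_lt hi)
    rw [coeff_succ_binomialSeries_sub_one, Ring.choose_natCast, Nat.choose_eq_zero_of_lt hi,
      Nat.cast_zero]
  rw [mul_sub, mul_one, map_sub, hvanish, sub_zero, hfactor, mul_assoc,
    PowerSeries.coeff_X_pow_mul', if_pos (by omega)]
  exact right_ne_zero_of_mul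
    (neg_one_pow_mul_coeff_aeval_mul_binomialSeries_pos hP0 hm (by omega)).ne'

theorem coeff_taylorIncrement_pow_coeff_zero_ne_zero {s k n : ℕ} {c : ℝ⟦X⟧}
    (hc : c.coeff 0 ≠ 0) (hkn : k ≤ n) (hn : n ≤ s * k) :
    ((taylorIncrement s c ^ k).coeff n).coeff 0 ≠ 0 := by
  rw [PowerSeries.coeff_zero_eq_constantCoeff_apply, ← PowerSeries.coeff_map, map_pow,
    map_constantCoeff_taylorIncrement, smul_pow, PowerSeries.coeff_smul, smul_eq_mul]
  exact mul_ne_zero (pow_ne_zero k hc) (coeff_binomialSeries_natCast_sub_one_pow_pos hkn hn).ne'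

theorem coeff_taylorIncrement_pow_ne_zero {s m k n : ℕ} (hs : 0 < s) (hm : 0 < m) (hk : 0 < k)
    (hn : s * k < n) {a b : ℝ⟦X⟧} (ha : ∀ l, s < l → a.coeff l = 0) (ha0 : a.coeff 0 ≠ 0)
    (hb0 : b.coeff 0 ≠ 0) :
    (taylorIncrement s (a + PowerSeries.X ^ (s + m) * b) ^ k).coeff n ≠ 0 := by
  have hsK : s * (k - 1) < n := (Nat.mul_le_mul_left s (k.sub_le 1)).trans_lt hn
  have hexponent : (s : ℝ) - (s + m : ℕ) = -m := by
    push_cast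
    ring
  refine ne_of_apply_ne (PowerSeries.coeff (s + m)) ?_
  rw [taylorIncrement_add, taylorIncrement_X_pow_mul, hexponent,
    coeff_coeff_add_C_X_pow_mul_pow _ _ (by omega),
    coeff_pow_eq_zero (fun i hi => coeff_taylorIncrement_natCast_eq_zero ha hi) hn, map_zero,
    zero_add, map_constantCoeff_taylorIncrement, map_constantCoeff_taylorIncrement, smul_pow,
    smul_mul_smul_comm, PowerSeries.coeff_smul, smul_eq_mul]
  exact mul_ne_zero (by positivity) (mul_ne_zero (mul_ne_zero (pow_ne_zero _ ha0) hb0)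
    (coeff_binomialSeries_sub_one_pow_mul_ne_zero hs hm hsK))

theorem coeff_taylorIncrement_pow_ne_zero_of_coeff_ne_zero {s k n : ℕ} (hs : 0 < s) (hk : 0 < k)
    (hn : s * k < n) {c : ℝ⟦X⟧} (hc0 : c.coeff 0 ≠ 0) (hc : ∃ l, s < l ∧ c.coeff l ≠ 0) :
    (taylorIncrement s c ^ k).coeff n ≠ 0 := by
  have hsplit := PowerSeries.eq_X_pow_mul_shift_add_trunc (s + 1) c
  set r : ℝ⟦X⟧ := .mk fun i => c.coeff (i + (s + 1)) with hr
  have hr0 : r ≠ 0 := by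
    obtain ⟨l, hsl, hl⟩ := hc
    refine ne_of_apply_ne (PowerSeries.coeff (l - (s + 1))) ?_
    rwa [hr, PowerSeries.coeff_mk, Nat.sub_add_cancel hsl, map_zero]
  obtain ⟨ν, b, hb0, hb⟩ := exists_eq_X_pow_mul hr0
  rw [hb, ← mul_assoc, ← pow_add, add_assoc s, add_comm 1 ν, add_comm] at hsplit
  rw [hsplit]
  refine coeff_taylorIncrement_pow_ne_zero hs ν.succ_pos hk hn (fun l hl => ?_) ?_ hb0
  · rw [Polynomial.coeff_coe, PowerSeries.coeff_trunc, if_neg (by omega)]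
  · rwa [Polynomial.coeff_coe, PowerSeries.coeff_trunc, if_pos s.succ_pos]

end Nonvanishing

section MainResult

variable {s : ℕ} {g : ℝ → ℝ} {c : ℝ⟦X⟧}

theorem MemXS.eventually_iteratedDeriv_eq_zero (hg : MemXS s g) (hexp : HasExpansion s c g)
    (hc : ∀ l, s < l → c.coeff l = 0) :
    ∀ᶠ x in atTop, ∀ i, s < i → iteratedDeriv i g x = 0 := by
  have hsucc : ∀ᶠ x in atTop, iteratedDeriv (s + 1) g x = 0 := by
    refine (hg.2 (s + 1) (by omega)).resolve_right ?_
    rintro ⟨q, hq⟩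
    obtain ⟨D, hD0, hD⟩ := hq.exists_hasExpansion
    have hflat := hexp.iteratedDeriv (s + 1)
    rw [derivCoeffs_natCast_eq_zero hc s.lt_succ_self] at hflat
    exact hD0 (hflat.coeff_zero_eq_zero hD)
  filter_upwards [eventually_atTop_eventually_nhds hsucc] with x hx i hi
  obtain ⟨j, rfl⟩ := Nat.exists_eq_add_of_le' (Nat.succ_le_of_lt hi)
  rw [← iteratedDeriv_iteratedDeriv, EventuallyEq.iteratedDeriv_eq j hx]
  simp

theorem memAS_bellPoly (hg : MemAS s g) {n k : ℕ} (hkn : k ≤ n) (hn : n ≤ s * k) :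
    MemAS (s * k - n) fun x => bellPoly n k fun i => iteratedDeriv i g x := by
  obtain ⟨c, hc0, hexp⟩ := hg.exists_hasExpansion
  refine (hasExpansion_bellPoly hexp hkn).memAS ?_
  rw [PowerSeries.coeff_smul, smul_eq_mul]
  exact mul_ne_zero (by positivity) (coeff_taylorIncrement_pow_coeff_zero_ne_zero hc0 hkn hn)

theorem MemXS.bellPoly_eventually_eq_zero_or_memAS (hs : 0 < s) (hg : MemXS s g) {n k : ℕ}
    (hk : 0 < k) (hkn : k ≤ n) :
    (∀ᶠ x in atTop, bellPoly n k (fun i => iteratedDeriv i g x) = 0) ∨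
      ∃ ν : ℕ, MemAS (s * k - n - ν) fun x => bellPoly n k fun i => iteratedDeriv i g x := by
  rcases le_or_gt n (s * k) with hn | hn
  · exact .inr ⟨0, by simpa using memAS_bellPoly hg.1 hkn hn⟩
  obtain ⟨c, hc0, hexp⟩ := hg.1.exists_hasExpansion
  by_cases hc : ∀ l, s < l → c.coeff l = 0
  · left
    filter_upwards [hg.eventually_iteratedDeriv_eq_zero hexp hc] with x hx
    exact bellPoly_eq_zero hx hkn hn
  · right
    push Not at hc
    refine (hasExpansion_bellPoly hexp hkn).exists_memAS (smul_ne_zero (by positivity) ?_)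
    exact coeff_taylorIncrement_pow_ne_zero_of_coeff_ne_zero hs hk hn hc0 hc

theorem MemAS.eventually_deriv_pos (hs : 0 < s) (hg : MemAS s g)
    (hpos : ∀ᶠ x in atTop, 0 ≤ g x) : ∀ᶠ x in atTop, 0 < deriv g x := by
  obtain ⟨c, hc0, hexp⟩ := hg.exists_hasExpansion
  have hc_pos : 0 < c.coeff 0 := (hexp.coeff_zero_nonneg hpos).lt_of_ne' hc0
  rw [← iteratedDeriv_one]
  refine (hexp.iteratedDeriv 1).eventually_pos ?_
  rw [derivCoeffs, PowerSeries.coeff_mk]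
  simpa using mul_pos hc_pos (Nat.cast_pos.2 hs)

end MainResult

/-- for `g ∈ X^(s)` strictly (`s` a positive integer, `g(x) → +∞`) and
`1 ≤ k ≤ n`, the function `L_{n,k}(x) = B_{n,k}(g'(x), …, g^{(n−k+1)}(x))` either vanishes
identically for all large `x` or belongs to `A^(sk−n−ν)` strictly for some nonnegative
integer `ν`; moreover `L_{k,k}(x) = (g'(x))^k`, which is positive for all large `x` and
belongs to `A^(sk−k)` strictly. -/
theorem bell_of_g (s : ℕ) (hs : 0 < s) (g : ℝ → ℝ)
    (hg : MemXS (s : ℝ) g) (hgtop : Tendsto g atTop atTop)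
    (n k : ℕ) (hk : 1 ≤ k) (hkn : k ≤ n) :
    ((∀ᶠ x in atTop, bellPoly n k (fun i => iteratedDeriv i g x) = 0) ∨
      ∃ ν : ℕ, MemAS ((s : ℝ) * (k : ℝ) - (n : ℝ) - (ν : ℝ))
        (fun x => bellPoly n k (fun i => iteratedDeriv i g x))) ∧
    (∀ x : ℝ, bellPoly k k (fun i => iteratedDeriv i g x) = (deriv g x) ^ k) ∧
    (∀ᶠ x in atTop, 0 < (deriv g x) ^ k) ∧
    MemAS ((s : ℝ) * (k : ℝ) - (k : ℝ)) (fun x => (deriv g x) ^ k) := by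
  have hself (x : ℝ) : bellPoly k k (fun i => iteratedDeriv i g x) = deriv g x ^ k := by
    rw [bellPoly_self, iteratedDeriv_one]
  refine ⟨hg.bellPoly_eventually_eq_zero_or_memAS hs hk hkn, hself, ?_, ?_⟩
  · filter_upwards [hg.1.eventually_deriv_pos hs (hgtop.eventually_ge_atTop 0)] with x hx
    exact pow_pos hx k
  · simpa only [hself] using memAS_bellPoly hg.1 le_rfl (Nat.le_mul_of_pos_left k hs)
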